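/- Fix θ ∈ (−π/2, π/4) and set B₁ = √(cos θ − sin θ), B₂ = 1 + √(1 − tan θ). Define X^θ : ℝ² → ℝ³ by X^θ(u,v) = ( e^{−B₁u}·[ (B₂(B₂(e^{2B₁u} − 1) + 2) − 2)·cos(B₁v) − 2e^{B₁u}(B₁B₂u + B₂ − 1) ] / (2B₁²B₂(B₂ − 1)), e^{−B₁u}·[ (B₂e^{2B₁u} − B₂ + 2)·sin(B₁v) − 2B₁v·e^{B₁u} ] / (2B₁²(B₂ − 1)), −[B₁B₂u + e^{−B₁u}·cos(B₁v) − 1] / (B₁²B₂) ). Then: (i) each component of X^θ is harmonic (X_uu + X_vv = 0 on ℝ²); (ii) X^θ is conformal with respect to the Minkowski inner product: ⟨X_u, X_u⟩ = ⟨X_v, X_v⟩ and ⟨X_u, X_v⟩ = 0 everywhere; (iii) X^θ has planar curvature lines: det(X_u, X_uu, X_uuu) = 0 and det(X_v, X_vv, X_vvv) = 0 identically on ℝ². (For θ ∈ (0, π/4) these are maximal Bonnet-type surfaces with spacelike axial direction, for θ = 0 with lightlike axial direction, and for θ ∈ (−π/2, 0) with timelike axial direction.) -/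

import Mathlib

open Real Filter

/-- Partial derivative in the first variable. -/
noncomputable def pu {E : Type*} [NormedAddCommGroup E] [NormedSpace ℝ E]
    (f : ℝ → ℝ → E) (u v : ℝ) : E := deriv (fun x => f x v) u

/-- Partial derivative in the second variable. -/
noncomputable def pv {E : Type*} [NormedAddCommGroup E] [NormedSpace ℝ E]
    (f : ℝ → ℝ → E) (u v : ℝ) : E := deriv (fun y => f u y) v

/-- Minkowski inner product on ℝ³ = ℝ^{2,1}, with coordinates (x₁, x₂, x₀). -/
def mink (x y : ℝ × ℝ × ℝ) : ℝ := x.1 * y.1 + x.2.1 * y.2.1 - x.2.2 * y.2.2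

/-- Determinant of the 3×3 matrix with rows a, b, c. -/
def det3 (a b c : ℝ × ℝ × ℝ) : ℝ :=
  a.1 * (b.2.1 * c.2.2 - b.2.2 * c.2.1)
    - a.2.1 * (b.1 * c.2.2 - b.2.2 * c.1)
    + a.2.2 * (b.1 * c.2.1 - b.2.1 * c.1)

/-!
The surface is the real part of a holomorphic curve `Φ : ℂ → ℂ³` in `z = u + iv`, whose derivative
is the Weierstrass form `f (1 + g², i(1 - g²), -2g)` with Gauss map `g = α e^{bz} + β` and
`f = κ e^{-bz}`, all constants real. Real parts of holomorphic curves are harmonic, and the real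
part is conformal because `Φ'` is isotropic. The `u`-lines are planar because `X_u` is orthogonal to
a vector depending only on `v`, the `v`-lines because `X_v` is orthogonal to a vector depending only
on `u`; the determinant conditions follow by differentiating these orthogonality relations.
-/

section HolomorphicCurves

variable {E F : Type*} [NormedAddCommGroup E] [NormedSpace ℝ E]
  [NormedAddCommGroup F] [NormedSpace ℝ F]

/-- The surface `(u, v) ↦ L (Φ (u + iv))` obtained from a complex curve `Φ` by a real-linear
map `L`. For `L` the coordinatewise real part, `Φ` is the complex lift of the surface. -/
noncomputable def realImage (L : F →L[ℝ] E) (Φ : ℂ → F) (u v : ℝ) : E :=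
  L (Φ (u + v * Complex.I))

variable [NormedSpace ℂ F] [IsScalarTower ℝ ℂ F] (L : F →L[ℝ] E) {Φ : ℂ → F}

theorem pu_realImage (hΦ : Differentiable ℂ Φ) :
    pu (realImage L Φ) = realImage L (deriv Φ) := by
  funext u v
  have line : HasDerivAt (fun x : ℝ => (x + v * Complex.I : ℂ)) 1 u :=
    (hasDerivAt_id u).ofReal_comp.add_const _
  have chain := (hΦ (u + v * Complex.I)).hasDerivAt.scomp u line
  rw [one_smul] at chain
  exact (L.hasFDerivAt.comp_hasDerivAt u chain).deriv

theorem pv_realImage (hΦ : Differentiable ℂ Φ) :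
    pv (realImage L Φ) = realImage L (Complex.I • deriv Φ) := by
  funext u v
  have line : HasDerivAt (fun y : ℝ => (u + y * Complex.I : ℂ)) Complex.I v := by
    simpa using ((hasDerivAt_id v).ofReal_comp.mul_const Complex.I).const_add (u : ℂ)
  have chain := (hΦ (u + v * Complex.I)).hasDerivAt.scomp v line
  exact (L.hasFDerivAt.comp_hasDerivAt v chain).deriv

theorem pu_pu_add_pv_pv_realImage [CompleteSpace F] (hΦ : Differentiable ℂ Φ) (u v : ℝ) :
    pu (pu (realImage L Φ)) u v + pv (pv (realImage L Φ)) u v = 0 := by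
  have hΦ' : Differentiable ℂ (deriv Φ) := hΦ.deriv
  have second_deriv : Complex.I • deriv (Complex.I • deriv Φ) = -deriv (deriv Φ) := by
    funext z
    rw [Pi.smul_apply, deriv_const_smul _ (hΦ' z), smul_smul, Complex.I_mul_I, neg_one_smul,
      Pi.neg_apply]
  rw [pu_realImage L hΦ, pu_realImage L hΦ', pv_realImage L hΦ,
    pv_realImage L (hΦ'.const_smul Complex.I), second_deriv]
  simp only [realImage, Pi.neg_apply, map_neg, add_neg_cancel]

end HolomorphicCurves

section NullCurves

/-- The coordinatewise real part `ℂ³ → ℝ³`. -/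
noncomputable def rePart : ℂ × ℂ × ℂ →L[ℝ] ℝ × ℝ × ℝ :=
  Complex.reCLM.prodMap (Complex.reCLM.prodMap Complex.reCLM)

theorem rePart_apply (x y z : ℂ) : rePart (x, y, z) = (x.re, y.re, z.re) := rfl

/-- A vector of `ℂ³` is null if it is isotropic for the complex-bilinear extension of the
Minkowski inner product. -/
def IsNull (w : ℂ × ℂ × ℂ) : Prop := w.1 ^ 2 + w.2.1 ^ 2 - w.2.2 ^ 2 = 0

theorem IsNull.mink_rePart {w : ℂ × ℂ × ℂ} (hw : IsNull w) :
    mink (rePart w) (rePart w) = mink (rePart (Complex.I • w)) (rePart (Complex.I • w)) ∧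
      mink (rePart w) (rePart (Complex.I • w)) = 0 := by
  obtain ⟨x, y, z⟩ := w
  have hre := congrArg Complex.re hw
  have him := congrArg Complex.im hw
  simp only [pow_two, Complex.sub_re, Complex.add_re, Complex.mul_re, Complex.zero_re] at hre
  simp only [pow_two, Complex.sub_im, Complex.add_im, Complex.mul_im, Complex.zero_im] at him
  simp only [Prod.smul_mk, rePart_apply, mink, smul_eq_mul, Complex.I_mul_re]
  constructor
  · linear_combination hre
  · linear_combination -him / 2

theorem conformal_realImage_of_isNull {Φ : ℂ → ℂ × ℂ × ℂ} (hΦ : Differentiable ℂ Φ)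
    (hnull : ∀ z, IsNull (deriv Φ z)) (u v : ℝ) :
    mink (pu (realImage rePart Φ) u v) (pu (realImage rePart Φ) u v) =
        mink (pv (realImage rePart Φ) u v) (pv (realImage rePart Φ) u v) ∧
      mink (pu (realImage rePart Φ) u v) (pv (realImage rePart Φ) u v) = 0 := by
  rw [pu_realImage rePart hΦ, pv_realImage rePart hΦ]
  exact (hnull _).mink_rePart

/-- The integrand of the Weierstrass-type representation of maximal surfaces, at a point where
the Gauss map has value `g` and the holomorphic one-form is `f dz`. -/
noncomputable def weierstrass (f g : ℂ) : ℂ × ℂ × ℂ :=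
  (f * (1 + g ^ 2), f * (Complex.I * (1 - g ^ 2)), f * (-2 * g))

theorem isNull_weierstrass (f g : ℂ) : IsNull (weierstrass f g) := by
  simp only [IsNull, weierstrass]
  linear_combination f ^ 2 * (1 - g ^ 2) ^ 2 * Complex.I_sq

end NullCurves

section PlanarCurves

theorem mink_deriv_eq_zero {n : ℝ × ℝ × ℝ} {γ : ℝ → ℝ × ℝ × ℝ} (h : ∀ t, mink n (γ t) = 0)
    (t : ℝ) : mink n (deriv γ t) = 0 := by
  by_cases hγ : DifferentiableAt ℝ γ t
  · have hfst : HasDerivAt (fun s => (γ s).1) (deriv γ t).1 t :=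
      (ContinuousLinearMap.fst ℝ ℝ (ℝ × ℝ)).hasFDerivAt.comp_hasDerivAt t hγ.hasDerivAt
    have hsnd : HasDerivAt (fun s => (γ s).2) (deriv γ t).2 t :=
      (ContinuousLinearMap.snd ℝ ℝ (ℝ × ℝ)).hasFDerivAt.comp_hasDerivAt t hγ.hasDerivAt
    have hsnd_fst : HasDerivAt (fun s => (γ s).2.1) (deriv γ t).2.1 t :=
      (ContinuousLinearMap.fst ℝ ℝ ℝ).hasFDerivAt.comp_hasDerivAt t hsnd
    have hsnd_snd : HasDerivAt (fun s => (γ s).2.2) (deriv γ t).2.2 t :=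
      (ContinuousLinearMap.snd ℝ ℝ ℝ).hasFDerivAt.comp_hasDerivAt t hsnd
    have hmink : HasDerivAt (fun s => mink n (γ s)) (mink n (deriv γ t)) t :=
      ((hfst.const_mul n.1).add (hsnd_fst.const_mul n.2.1)).sub (hsnd_snd.const_mul n.2.2)
    simp only [h] at hmink
    exact hmink.unique (hasDerivAt_const t 0)
  · simp [deriv_zero_of_not_differentiableAt hγ, mink]

theorem det3_eq_zero_of_mink_eq_zero {n a b c : ℝ × ℝ × ℝ} (hn : n ≠ 0) (ha : mink n a = 0)
    (hb : mink n b = 0) (hc : mink n c = 0) : det3 a b c = 0 := by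
  obtain ⟨n₁, n₂, n₀⟩ := n
  simp only [mink] at ha hb hc
  -- Cramer's rule: `det3 a b c` times each coordinate of `n` is a combination of `ha`, `hb`, `hc`.
  have h₁ : n₁ * det3 a b c = 0 := by
    unfold det3
    linear_combination (b.2.1 * c.2.2 - b.2.2 * c.2.1) * ha
      - (a.2.1 * c.2.2 - a.2.2 * c.2.1) * hb + (a.2.1 * b.2.2 - a.2.2 * b.2.1) * hc
  have h₂ : n₂ * det3 a b c = 0 := by
    unfold det3
    linear_combination -(b.1 * c.2.2 - b.2.2 * c.1) * ha
      + (a.1 * c.2.2 - a.2.2 * c.1) * hb - (a.1 * b.2.2 - a.2.2 * b.1) * hc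
  have h₀ : n₀ * det3 a b c = 0 := by
    unfold det3
    linear_combination -(b.1 * c.2.1 - b.2.1 * c.1) * ha
      + (a.1 * c.2.1 - a.2.1 * c.1) * hb - (a.1 * b.2.1 - a.2.1 * b.1) * hc
  by_contra hdet
  exact hn (by simp_all)

theorem det3_deriv_eq_zero_of_mink_deriv_eq_zero {n : ℝ × ℝ × ℝ} {γ : ℝ → ℝ × ℝ × ℝ} (hn : n ≠ 0)
    (h : ∀ t, mink n (deriv γ t) = 0) (t : ℝ) :
    det3 (deriv γ t) (deriv (deriv γ) t) (deriv (deriv (deriv γ)) t) = 0 :=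
  have h' := mink_deriv_eq_zero h
  det3_eq_zero_of_mink_eq_zero hn (h t) (h' t) (mink_deriv_eq_zero h' t)

end PlanarCurves

section BonnetForm

variable (b κ α β : ℝ)

/-- The null form with Weierstrass data `g = α e^{bz} + β`, `f = κ e^{-bz}`, whose primitives are
the complex lifts of the surfaces of Bonnet type. -/
noncomputable def bonnetForm (z : ℂ) : ℂ × ℂ × ℂ :=
  weierstrass (κ * Complex.exp (-(b * z))) (α * Complex.exp (b * z) + β)

theorem bonnetForm_eq (z : ℂ) :
    bonnetForm b κ α β z =
      (κ * (α ^ 2 * Complex.exp (b * z) + (1 + β ^ 2) * Complex.exp (-(b * z)) + 2 * α * β),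
        κ * (Complex.I *
          ((1 - β ^ 2) * Complex.exp (-(b * z)) - α ^ 2 * Complex.exp (b * z) - 2 * α * β)),
        κ * (-2 * (α + β * Complex.exp (-(b * z))))) := by
  have h : Complex.exp (-(b * z)) * Complex.exp (b * z) = 1 := by
    rw [← Complex.exp_add, neg_add_cancel, Complex.exp_zero]
  simp only [bonnetForm, weierstrass]
  refine Prod.ext ?_ (Prod.ext ?_ ?_) <;> dsimp only
  · linear_combination κ * (α ^ 2 * Complex.exp (b * z) + 2 * α * β) * h
  · linear_combination -κ * Complex.I * (α ^ 2 * Complex.exp (b * z) + 2 * α * β) * h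
  · linear_combination -2 * κ * α * h

theorem exp_ofReal_mul_add_mul_I (u v : ℝ) :
    Complex.exp (b * (u + v * Complex.I)) =
      ⟨exp (b * u) * cos (b * v), exp (b * u) * sin (b * v)⟩ := by
  apply Complex.ext <;> simp [Complex.exp_re, Complex.exp_im]

theorem exp_neg_ofReal_mul_add_mul_I (u v : ℝ) :
    Complex.exp (-(b * (u + v * Complex.I))) =
      ⟨exp (-(b * u)) * cos (b * v), -(exp (-(b * u)) * sin (b * v))⟩ := by
  simpa using exp_ofReal_mul_add_mul_I (-b) u v

theorem rePart_bonnetForm (u v : ℝ) :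
    rePart (bonnetForm b κ α β (u + v * Complex.I)) =
      (κ * ((α ^ 2 * exp (b * u) + (1 + β ^ 2) * exp (-(b * u))) * cos (b * v) + 2 * α * β),
        κ * ((α ^ 2 * exp (b * u) + (1 - β ^ 2) * exp (-(b * u))) * sin (b * v)),
        κ * (-2 * (α + β * exp (-(b * u)) * cos (b * v)))) := by
  rw [bonnetForm_eq, rePart_apply, exp_ofReal_mul_add_mul_I, exp_neg_ofReal_mul_add_mul_I]
  refine Prod.ext ?_ (Prod.ext ?_ ?_) <;>
    simp only [pow_two, Complex.mul_re, Complex.mul_im, Complex.add_re, Complex.add_im,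
      Complex.sub_re, Complex.sub_im, Complex.neg_re, Complex.neg_im, Complex.ofReal_re,
      Complex.ofReal_im, Complex.one_re, Complex.one_im, Complex.re_ofNat, Complex.im_ofNat,
      Complex.I_re, Complex.I_im] <;>
    ring

theorem rePart_I_smul_bonnetForm (u v : ℝ) :
    rePart (Complex.I • bonnetForm b κ α β (u + v * Complex.I)) =
      (κ * (((1 + β ^ 2) * exp (-(b * u)) - α ^ 2 * exp (b * u)) * sin (b * v)),
        κ * ((α ^ 2 * exp (b * u) - (1 - β ^ 2) * exp (-(b * u))) * cos (b * v) + 2 * α * β),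
        κ * (-2 * (β * exp (-(b * u)) * sin (b * v)))) := by
  rw [bonnetForm_eq, exp_ofReal_mul_add_mul_I, exp_neg_ofReal_mul_add_mul_I]
  simp only [Prod.smul_mk, rePart_apply]
  refine Prod.ext ?_ (Prod.ext ?_ ?_) <;>
    simp only [pow_two, Complex.mul_re, Complex.mul_im, Complex.add_re, Complex.add_im,
      Complex.sub_re, Complex.sub_im, Complex.neg_re, Complex.neg_im, Complex.ofReal_re,
      Complex.ofReal_im, Complex.one_re, Complex.one_im, Complex.re_ofNat, Complex.im_ofNat,
      Complex.I_re, Complex.I_im, smul_eq_mul] <;>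
    ring

theorem exists_normal_rePart_bonnetForm (v : ℝ) :
    ∃ n ≠ 0, ∀ u : ℝ, mink n (rePart (bonnetForm b κ α β (u + v * Complex.I))) = 0 := by
  refine ⟨(sin (b * v), -cos (b * v), -β * sin (b * v)), fun h => ?_, fun u => ?_⟩
  · have hsin : sin (b * v) = 0 := congrArg Prod.fst h
    have hcos : -cos (b * v) = 0 := congrArg (fun x => x.2.1) h
    nlinarith [sin_sq_add_cos_sq (b * v)]
  · rw [rePart_bonnetForm]
    simp only [mink]
    ring

theorem exists_normal_rePart_I_smul_bonnetForm (u : ℝ) :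
    ∃ n ≠ 0, ∀ v : ℝ,
      mink n (rePart (Complex.I • bonnetForm b κ α β (u + v * Complex.I))) = 0 := by
  simp only [rePart_I_smul_bonnetForm, mink]
  rcases eq_or_ne β 0 with rfl | hβ
  · exact ⟨(0, 0, 1), by simp, fun v => by ring⟩
  · refine ⟨(2 * β * exp (-(b * u)), 0, α ^ 2 * exp (b * u) - (1 + β ^ 2) * exp (-(b * u))),
      fun h => ?_, fun v => by ring⟩
    have hfst : 2 * β * exp (-(b * u)) = 0 := congrArg Prod.fst h
    simp [hβ] at hfst

variable {b κ α β} {Φ : ℂ → ℂ × ℂ × ℂ}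

theorem planar_curvature_lines_realImage (hΦ : ∀ z, HasDerivAt Φ (bonnetForm b κ α β z) z)
    (u v : ℝ) :
    let X := realImage rePart Φ
    det3 (pu X u v) (pu (pu X) u v) (pu (pu (pu X)) u v) = 0 ∧
      det3 (pv X u v) (pv (pv X) u v) (pv (pv (pv X)) u v) = 0 := by
  intro X
  have hdiff : Differentiable ℂ Φ := fun z => (hΦ z).differentiableAt
  have hderiv : deriv Φ = bonnetForm b κ α β := funext fun z => (hΦ z).deriv
  have hu : pu X = realImage rePart (bonnetForm b κ α β) := hderiv ▸ pu_realImage rePart hdiff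
  have hv : pv X = realImage rePart (Complex.I • bonnetForm b κ α β) :=
    hderiv ▸ pv_realImage rePart hdiff
  obtain ⟨m, hm, hmu⟩ := exists_normal_rePart_bonnetForm b κ α β v
  obtain ⟨n, hn, hnv⟩ := exists_normal_rePart_I_smul_bonnetForm b κ α β u
  have u_line_planar (x : ℝ) : mink m (pu X x v) = 0 := hu ▸ hmu x
  have v_line_planar (y : ℝ) : mink n (pv X u y) = 0 := hv ▸ hnv y
  exact ⟨det3_deriv_eq_zero_of_mink_deriv_eq_zero (γ := fun x => X x v) hm u_line_planar u,
    det3_deriv_eq_zero_of_mink_deriv_eq_zero (γ := fun y => X u y) hn v_line_planar v⟩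

end BonnetForm

section BonnetCurve

variable (b κ α β : ℝ)

/-- A primitive of `bonnetForm b (κ * b) α β`. The amplitude is scaled by `b` so that no division
by `b` is needed. -/
noncomputable def bonnetCurve (z : ℂ) : ℂ × ℂ × ℂ :=
  (κ * (α ^ 2 * Complex.exp (b * z) - (1 + β ^ 2) * Complex.exp (-(b * z)) + 2 * α * β * (b * z)),
    κ * (Complex.I * (-(1 - β ^ 2) * Complex.exp (-(b * z)) - α ^ 2 * Complex.exp (b * z)
      - 2 * α * β * (b * z))),
    κ * (-2 * (α * (b * z) - β * Complex.exp (-(b * z)))))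

theorem hasDerivAt_bonnetCurve (z : ℂ) :
    HasDerivAt (bonnetCurve b κ α β) (bonnetForm b (κ * b) α β z) z := by
  have hlin : HasDerivAt (fun w : ℂ => b * w) (b : ℂ) z := by
    simpa using (hasDerivAt_id' z).const_mul (b : ℂ)
  have hexp := hlin.cexp
  have hexp_neg := hlin.fun_neg.cexp
  have h₁ := (((hexp.const_mul (α ^ 2 : ℂ)).sub (hexp_neg.const_mul (1 + β ^ 2 : ℂ))).add
    (hlin.const_mul (2 * α * β : ℂ))).const_mul (κ : ℂ)
  have h₂ := ((((hexp_neg.const_mul (-(1 - β ^ 2) : ℂ)).sub (hexp.const_mul (α ^ 2 : ℂ))).sub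
    (hlin.const_mul (2 * α * β : ℂ))).const_mul Complex.I).const_mul (κ : ℂ)
  have h₃ := (((hlin.const_mul (α : ℂ)).sub (hexp_neg.const_mul (β : ℂ))).const_mul
    (-2 : ℂ)).const_mul (κ : ℂ)
  refine (h₁.prodMk (h₂.prodMk h₃)).congr_deriv ?_
  rw [bonnetForm_eq]
  refine Prod.ext ?_ (Prod.ext ?_ ?_) <;> dsimp only <;> push_cast <;> ring

theorem realImage_bonnetCurve (u v : ℝ) :
    realImage rePart (bonnetCurve b κ α β) u v =
      (κ * ((α ^ 2 * exp (b * u) - (1 + β ^ 2) * exp (-(b * u))) * cos (b * v)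
          + 2 * α * β * (b * u)),
        κ * ((α ^ 2 * exp (b * u) - (1 - β ^ 2) * exp (-(b * u))) * sin (b * v)
          + 2 * α * β * (b * v)),
        κ * (-2 * (α * (b * u) - β * exp (-(b * u)) * cos (b * v)))) := by
  rw [realImage, bonnetCurve, rePart_apply, exp_ofReal_mul_add_mul_I,
    exp_neg_ofReal_mul_add_mul_I]
  refine Prod.ext ?_ (Prod.ext ?_ ?_) <;>
    simp only [pow_two, Complex.mul_re, Complex.mul_im, Complex.add_re, Complex.add_im,
      Complex.sub_re, Complex.sub_im, Complex.neg_re, Complex.neg_im, Complex.ofReal_re,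
      Complex.ofReal_im, Complex.one_re, Complex.one_im, Complex.re_ofNat, Complex.im_ofNat,
      Complex.I_re, Complex.I_im] <;>
    ring

end BonnetCurve

section BonnetLift

/-- The complex lift of the surface `X^θ`, as a function of `B₁` and `B₂`: a translate of
`bonnetCurve`, with Gauss map `(B₂ e^{B₁z} - 1) / (B₂ - 1)`. -/
noncomputable def bonnetLift (B1 B2 : ℝ) (z : ℂ) : ℂ × ℂ × ℂ :=
  bonnetCurve B1 ((B2 - 1) / (2 * B1 ^ 2 * B2)) (B2 / (B2 - 1)) (-1 / (B2 - 1)) z +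
    (((-1 / (B1 ^ 2 * B2) : ℝ) : ℂ), 0, ((1 / (B1 ^ 2 * B2) : ℝ) : ℂ))

theorem hasDerivAt_bonnetLift (B1 B2 : ℝ) (z : ℂ) :
    HasDerivAt (bonnetLift B1 B2)
      (bonnetForm B1 ((B2 - 1) / (2 * B1 ^ 2 * B2) * B1) (B2 / (B2 - 1)) (-1 / (B2 - 1)) z) z :=
  (hasDerivAt_bonnetCurve ..).add_const _

theorem realImage_bonnetLift {B1 B2 : ℝ} (hB1 : B1 ≠ 0) (hB2 : B2 ≠ 0) (hB2' : B2 ≠ 1)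
    (u v : ℝ) :
    realImage rePart (bonnetLift B1 B2) u v =
      (Real.exp (-(B1 * u)) *
          ((B2 * (B2 * (Real.exp (2 * B1 * u) - 1) + 2) - 2) * Real.cos (B1 * v)
            - 2 * Real.exp (B1 * u) * (B1 * B2 * u + B2 - 1))
          / (2 * B1 ^ 2 * B2 * (B2 - 1)),
       Real.exp (-(B1 * u)) *
          ((B2 * Real.exp (2 * B1 * u) - B2 + 2) * Real.sin (B1 * v)
            - 2 * B1 * v * Real.exp (B1 * u))
          / (2 * B1 ^ 2 * (B2 - 1)),
       -((B1 * B2 * u + Real.exp (-(B1 * u)) * Real.cos (B1 * v) - 1)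
          / (B1 ^ 2 * B2))) := by
  have hB2_sub_one : B2 - 1 ≠ 0 := sub_ne_zero.mpr hB2'
  have hexp_two : exp (2 * B1 * u) = exp (B1 * u) ^ 2 := by
    rw [← exp_nat_mul, Nat.cast_ofNat, mul_assoc]
  have hcurve := realImage_bonnetCurve B1 ((B2 - 1) / (2 * B1 ^ 2 * B2)) (B2 / (B2 - 1))
    (-1 / (B2 - 1)) u v
  unfold realImage at hcurve ⊢
  rw [bonnetLift, map_add, hcurve, rePart_apply, hexp_two, exp_neg]
  have hexp_ne : exp (B1 * u) ≠ 0 := (exp_pos _).ne'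
  refine Prod.ext ?_ (Prod.ext ?_ ?_) <;>
    simp only [Prod.mk_add_mk, Complex.ofReal_re, Complex.zero_re] <;> field_simp <;> ring

end BonnetLift

section Parameters

variable {θ : ℝ}

theorem tan_lt_one_of_mem_Ioo (hθ : θ ∈ Set.Ioo (-(π / 2)) (π / 4)) : tan θ < 1 :=
  tan_pi_div_four ▸ tan_lt_tan_of_lt_of_lt_pi_div_two hθ.1 (by linarith [pi_pos]) hθ.2

theorem sin_lt_cos_of_mem_Ioo (hθ : θ ∈ Set.Ioo (-(π / 2)) (π / 4)) : sin θ < cos θ := by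
  have hcos : 0 < cos θ := cos_pos_of_mem_Ioo ⟨hθ.1, hθ.2.trans (by linarith [pi_pos])⟩
  have htan := tan_lt_one_of_mem_Ioo hθ
  rwa [tan_eq_sin_div_cos, div_lt_one hcos] at htan

end Parameters

theorem bonnet_family_is_maximal_with_planar_curvature_lines_general
    (B1 B2 : ℝ) (hB1 : B1 ≠ 0) (hB2 : B2 ≠ 0) (hB2' : B2 ≠ 1)
    (X : ℝ → ℝ → ℝ × ℝ × ℝ)
    (hX : ∀ u v : ℝ, X u v =
      (Real.exp (-(B1 * u)) *
          ((B2 * (B2 * (Real.exp (2 * B1 * u) - 1) + 2) - 2) * Real.cos (B1 * v)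
            - 2 * Real.exp (B1 * u) * (B1 * B2 * u + B2 - 1))
          / (2 * B1 ^ 2 * B2 * (B2 - 1)),
       Real.exp (-(B1 * u)) *
          ((B2 * Real.exp (2 * B1 * u) - B2 + 2) * Real.sin (B1 * v)
            - 2 * B1 * v * Real.exp (B1 * u))
          / (2 * B1 ^ 2 * (B2 - 1)),
       -((B1 * B2 * u + Real.exp (-(B1 * u)) * Real.cos (B1 * v) - 1)
          / (B1 ^ 2 * B2)))) :
    (∀ u v : ℝ, pu (pu X) u v + pv (pv X) u v = 0) ∧
    (∀ u v : ℝ,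
      mink (pu X u v) (pu X u v) = mink (pv X u v) (pv X u v) ∧
      mink (pu X u v) (pv X u v) = 0) ∧
    (∀ u v : ℝ,
      det3 (pu X u v) (pu (pu X) u v) (pu (pu (pu X)) u v) = 0 ∧
      det3 (pv X u v) (pv (pv X) u v) (pv (pv (pv X)) u v) = 0) := by
  obtain rfl : X = realImage rePart (bonnetLift B1 B2) :=
    funext₂ fun u v => (hX u v).trans (realImage_bonnetLift hB1 hB2 hB2' u v).symm
  have hΦ := hasDerivAt_bonnetLift B1 B2
  have hdiff : Differentiable ℂ (bonnetLift B1 B2) := fun z => (hΦ z).differentiableAt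
  have hnull (z : ℂ) : IsNull (deriv (bonnetLift B1 B2) z) :=
    (hΦ z).deriv ▸ isNull_weierstrass _ _
  exact ⟨pu_pu_add_pv_pv_realImage rePart hdiff, conformal_realImage_of_isNull hdiff hnull,
    planar_curvature_lines_realImage hΦ⟩

/-- For θ ∈ (−π/2, π/4), the explicit map X^θ (maximal Bonnet-type
surface with spacelike, lightlike, or timelike axial direction) is harmonic, conformal
with respect to the Minkowski inner product, and has planar u- and v-curvature lines. -/
theorem bonnet_family_is_maximal_with_planar_curvature_lines
    (θ : ℝ) (hθ : θ ∈ Set.Ioo (-(π / 2)) (π / 4))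
    (B1 B2 : ℝ)
    (hB1 : B1 = Real.sqrt (Real.cos θ - Real.sin θ))
    (hB2 : B2 = 1 + Real.sqrt (1 - Real.tan θ))
    (X : ℝ → ℝ → ℝ × ℝ × ℝ)
    (hX : ∀ u v : ℝ, X u v =
      (Real.exp (-(B1 * u)) *
          ((B2 * (B2 * (Real.exp (2 * B1 * u) - 1) + 2) - 2) * Real.cos (B1 * v)
            - 2 * Real.exp (B1 * u) * (B1 * B2 * u + B2 - 1))
          / (2 * B1 ^ 2 * B2 * (B2 - 1)),
       Real.exp (-(B1 * u)) *
          ((B2 * Real.exp (2 * B1 * u) - B2 + 2) * Real.sin (B1 * v)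
            - 2 * B1 * v * Real.exp (B1 * u))
          / (2 * B1 ^ 2 * (B2 - 1)),
       -((B1 * B2 * u + Real.exp (-(B1 * u)) * Real.cos (B1 * v) - 1)
          / (B1 ^ 2 * B2)))) :
    (∀ u v : ℝ, pu (pu X) u v + pv (pv X) u v = 0) ∧
    (∀ u v : ℝ,
      mink (pu X u v) (pu X u v) = mink (pv X u v) (pv X u v) ∧
      mink (pu X u v) (pv X u v) = 0) ∧
    (∀ u v : ℝ,
      det3 (pu X u v) (pu (pu X) u v) (pu (pu (pu X)) u v) = 0 ∧
      det3 (pv X u v) (pv (pv X) u v) (pv (pv (pv X)) u v) = 0) := by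
  have hB1_pos : 0 < B1 := hB1 ▸ Real.sqrt_pos.mpr (sub_pos.mpr (sin_lt_cos_of_mem_Ioo hθ))
  have hB2_gt : 1 < B2 :=
    hB2 ▸ lt_add_of_pos_right 1 (Real.sqrt_pos.mpr (sub_pos.mpr (tan_lt_one_of_mem_Ioo hθ)))
  exact bonnet_family_is_maximal_with_planar_curvature_lines_general B1 B2 hB1_pos.ne'
    (zero_lt_one.trans hB2_gt).ne' hB2_gt.ne' X hX
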